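/- arXiv:2202.12878 — 5 statements merged into one kernel-verified Lean document; each statement's English description precedes it below -/
import Mathlib

section
/- Let (F, q_F) be an object of _{(W_i)}Set^{(𝒱I)ᵒᵖ}. Then the map which sends the class [ε]_{𝒢_{(F,q_F)}} of ε ∈ Hom_{𝒱I}(V, W_i) to ε^*φ_i ∈ F(V) is well defined and is a bijection from ⊔_{i∈I} Hom_{𝒱I}(V, W_i)/∼_{𝒢_{(F,q_F)}} to F(V), naturally in V ∈ 𝒱I; in particular F is isomorphic to ⊔_{i∈I} Hom_{𝒱I}(−,W_i)/∼_{𝒢_{(F,q_F)}} compatibly with the surjections from ⊔_{i∈I} Hom_{𝒱I}(−,W_i). -/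
set_option maxHeartbeats 1000000

namespace Paper

/-- A finite-dimensional vector space over `𝔽_p = ZMod p`: an object of the
categories `𝒱^f` and `𝒱I`. -/
structure FDVec (p : ℕ) [Fact p.Prime] : Type 1 where
  carrier : Type
  [addCommGroup' : AddCommGroup carrier]
  [module' : Module (ZMod p) carrier]
  [finiteDimensional' : FiniteDimensional (ZMod p) carrier]

attribute [instance] FDVec.addCommGroup' FDVec.module' FDVec.finiteDimensional'

instance (p : ℕ) [Fact p.Prime] : CoeSort (FDVec p) Type := ⟨FDVec.carrier⟩

abbrev FDVec.of (p : ℕ) [Fact p.Prime] (X : Type) [AddCommGroup X] [Module (ZMod p) X]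
    [FiniteDimensional (ZMod p) X] : FDVec p := ⟨X⟩

variable {p : ℕ} [Fact p.Prime]

/-- The object of `𝒱I` determined by a subspace. -/
abbrev subFD {W : FDVec p} (U : Submodule (ZMod p) W) : FDVec p := FDVec.of p U

theorem comp_injective {A B C : Type} [AddCommGroup A] [Module (ZMod p) A]
    [AddCommGroup B] [Module (ZMod p) B] [AddCommGroup C] [Module (ZMod p) C]
    (f : A →ₗ[ZMod p] B) (g : B →ₗ[ZMod p] C)
    (hf : Function.Injective f) (hg : Function.Injective g) :
    Function.Injective (g ∘ₗ f) := fun _ _ h => hf (hg h)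

theorem linearMap_id_injective (V : Type) [AddCommGroup V] [Module (ZMod p) V] :
    Function.Injective (LinearMap.id : V →ₗ[ZMod p] V) := fun _ _ h => h

theorem equiv_toLinearMap_injective {A B : Type} [AddCommGroup A] [Module (ZMod p) A]
    [AddCommGroup B] [Module (ZMod p) B] (e : A ≃ₗ[ZMod p] B) :
    Function.Injective (e.toLinearMap : A →ₗ[ZMod p] B) := e.injective

/-- A presheaf on the category `𝒱I` of finite-dimensional `𝔽_p`-vector spaces
and injective linear maps: a contravariant functor to `Set`. -/
structure VIPresheaf (p : ℕ) [Fact p.Prime] where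
  obj : FDVec p → Type
  map : ∀ {V W : FDVec p} (f : V →ₗ[ZMod p] W), Function.Injective f → obj W → obj V
  map_id : ∀ (V : FDVec p) (h : Function.Injective (LinearMap.id : V →ₗ[ZMod p] V))
      (x : obj V), map LinearMap.id h x = x
  map_comp : ∀ {V W X : FDVec p} (f : V →ₗ[ZMod p] W) (hf : Function.Injective f)
      (g : W →ₗ[ZMod p] X) (hg : Function.Injective g)
      (hgf : Function.Injective (g ∘ₗ f)) (x : obj X),
      map (g ∘ₗ f) hgf x = map f hf (map g hg x)

/-- A groupoid whose objects are the pairs `(U, i)` with `U` a subspace of `W i`,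
and whose morphisms are linear isomorphisms between such subspaces. -/
structure SubGroupoid {ι : Type} (W : ι → FDVec p) where
  mor : ∀ (i j : ι) (U : Submodule (ZMod p) (W i)) (U' : Submodule (ZMod p) (W j)),
    Set (↥U ≃ₗ[ZMod p] ↥U')
  id_mem : ∀ i U, LinearEquiv.refl (ZMod p) ↥U ∈ mor i i U U
  comp_mem : ∀ (i j k : ι) (U : Submodule (ZMod p) (W i)) (U' : Submodule (ZMod p) (W j))
      (U'' : Submodule (ZMod p) (W k)) (α : ↥U ≃ₗ[ZMod p] ↥U')
      (β : ↥U' ≃ₗ[ZMod p] ↥U''),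
      α ∈ mor i j U U' → β ∈ mor j k U' U'' → (α.trans β) ∈ mor i k U U''
  inv_mem : ∀ (i j : ι) (U : Submodule (ZMod p) (W i)) (U' : Submodule (ZMod p) (W j))
      (α : ↥U ≃ₗ[ZMod p] ↥U'),
      α ∈ mor i j U U' → α.symm ∈ mor j i U' U

section Restriction

variable {Wi Wj : FDVec p} {U : Submodule (ZMod p) Wi} {U' : Submodule (ZMod p) Wj}

/-- The restriction of `α : U ≃ U'` to a subspace `M ≤ U`, as a map to the ambient space. -/
def restrictMap (α : ↥U ≃ₗ[ZMod p] ↥U') {M : Submodule (ZMod p) Wi}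
    (hMU : M ≤ U) : ↥M →ₗ[ZMod p] Wj :=
  U'.subtype ∘ₗ (α.toLinearMap) ∘ₗ (Submodule.inclusion hMU)

theorem restrictMap_injective (α : ↥U ≃ₗ[ZMod p] ↥U')
    {M : Submodule (ZMod p) Wi} (hMU : M ≤ U) :
    Function.Injective (restrictMap α hMU) := by
  intro a b hab
  have h1 : α (Submodule.inclusion hMU a) = α (Submodule.inclusion hMU b) := Subtype.ext hab
  have h2 := α.injective h1
  have h3 := congrArg Subtype.val h2
  exact Subtype.ext h3

/-- The image `α(M)` of a subspace `M ≤ U` under `α : U ≃ U'`. -/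
def restrictImg (α : ↥U ≃ₗ[ZMod p] ↥U') {M : Submodule (ZMod p) Wi}
    (hMU : M ≤ U) : Submodule (ZMod p) Wj :=
  LinearMap.range (restrictMap α hMU)

/-- The restriction-corestriction `α_M : M ≃ α(M)` of `α : U ≃ U'` to `M ≤ U`. -/
noncomputable def restrictEquiv (α : ↥U ≃ₗ[ZMod p] ↥U')
    {M : Submodule (ZMod p) Wi} (hMU : M ≤ U) :
    ↥M ≃ₗ[ZMod p] ↥(restrictImg α hMU) :=
  LinearEquiv.ofInjective _ (restrictMap_injective α hMU)

end Restriction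

/-- The restriction property of a groupoid on subspaces. -/
def SubGroupoid.HasRestriction {ι : Type} {W : ι → FDVec p} (G : SubGroupoid W) : Prop :=
  ∀ (i j : ι) (U : Submodule (ZMod p) (W i)) (U' : Submodule (ZMod p) (W j))
    (α : ↥U ≃ₗ[ZMod p] ↥U'), α ∈ G.mor i j U U' →
    ∀ (M : Submodule (ZMod p) (W i)) (hMU : M ≤ U),
      restrictEquiv α hMU ∈ G.mor i j M (restrictImg α hMU)

/-- An element of `⊔_{i} Hom_{𝒱I}(V, W i)`. -/
def InjHom (V : FDVec p) {ι : Type} (W : ι → FDVec p) : Type :=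
  Σ i : ι, {f : V →ₗ[ZMod p] W i // Function.Injective f}

/-- The relation `∼_𝒢` on `⊔_i Hom_{𝒱I}(V, W i)`. -/
def SubGroupoid.Rel {ι : Type} {W : ι → FDVec p} (G : SubGroupoid W) (V : FDVec p)
    (x y : InjHom V W) : Prop :=
  ∃ α ∈ G.mor x.1 y.1 (LinearMap.range x.2.1) (LinearMap.range y.2.1),
    ∀ v : V, ((α (x.2.1.rangeRestrict v) : ↥(LinearMap.range y.2.1)) : W y.1) = y.2.1 v

/-- A generating family of a presheaf `F` on `𝒱I`: a natural surjection
`q : ⊔_i Hom_{𝒱I}(−, W i) → F`. -/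
structure GenFamily {ι : Type} (W : ι → FDVec p) (F : VIPresheaf p) where
  q : ∀ (V : FDVec p) (i : ι) (f : V →ₗ[ZMod p] W i), Function.Injective f → F.obj V
  natural : ∀ (T V : FDVec p) (β : T →ₗ[ZMod p] V) (hβ : Function.Injective β)
      (i : ι) (f : V →ₗ[ZMod p] W i) (hf : Function.Injective f)
      (hfβ : Function.Injective (f ∘ₗ β)),
      q T i (f ∘ₗ β) hfβ = F.map β hβ (q V i f hf)
  surjective : ∀ (V : FDVec p) (x : F.obj V), ∃ i f hf, q V i f hf = x

/-- `φ_i = q(id_{W i})`. -/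
def GenFamily.phi {ι : Type} {W : ι → FDVec p} {F : VIPresheaf p} (Q : GenFamily W F)
    (i : ι) : F.obj (W i) :=
  Q.q (W i) i LinearMap.id (linearMap_id_injective _)

/-- The morphisms of the groupoid `𝒢_{(F,q)}`: isomorphisms `α : U ≃ U'` with
`α^* ι_{U'}^* φ_j = ι_U^* φ_i`. -/
def GenFamily.mor {ι : Type} {W : ι → FDVec p} {F : VIPresheaf p} (Q : GenFamily W F)
    (i j : ι) (U : Submodule (ZMod p) (W i)) (U' : Submodule (ZMod p) (W j)) :
    Set (↥U ≃ₗ[ZMod p] ↥U') :=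
  {α | F.map (V := subFD U) (W := subFD U') α.toLinearMap (equiv_toLinearMap_injective α)
        (F.map (V := subFD U') (W := W j) U'.subtype U'.injective_subtype (Q.phi j))
      = F.map (V := subFD U) (W := W i) U.subtype U.injective_subtype (Q.phi i)}

/-- The relation `∼_{𝒢_{(F,q)}}`. -/
def GenFamily.GRel {ι : Type} {W : ι → FDVec p} {F : VIPresheaf p} (Q : GenFamily W F)
    (V : FDVec p) (x y : InjHom V W) : Prop :=
  ∃ α ∈ Q.mor x.1 y.1 (LinearMap.range x.2.1) (LinearMap.range y.2.1),
    ∀ v : V, ((α (x.2.1.rangeRestrict v) : ↥(LinearMap.range y.2.1)) : W y.1) = y.2.1 v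

/-- `x ∈ F_i(V)`, where `F_i ⊆ F` is the image of `Hom_{𝒱I}(−, W i)` under `q`. -/
def GenFamily.memComponent {ι : Type} {W : ι → FDVec p} {F : VIPresheaf p}
    (Q : GenFamily W F) (i : ι) (V : FDVec p) (x : F.obj V) : Prop :=
  ∃ f hf, Q.q V i f hf = x

/-- Minimality of a generating family: `F_i ⊄ F_j` for `i ≠ j`. -/
def GenFamily.Minimal {ι : Type} {W : ι → FDVec p} {F : VIPresheaf p}
    (Q : GenFamily W F) : Prop :=
  ∀ i j : ι, i ≠ j →
    ¬ (∀ (V : FDVec p) (x : F.obj V), Q.memComponent i V x → Q.memComponent j V x)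

/-- A class in `𝐁(V, W)`, represented canonically by its "glue" subspace
`G = {(ν m, −ω m) : m ∈ M} ⊆ V × W`.  The two conditions express the injectivity
of `ν` and of `ω` respectively. -/
structure Corr (p : ℕ) [Fact p.Prime] (V W : FDVec p) where
  carrier : Submodule (ZMod p) (↥V × ↥W)
  inj_left : ∀ m ∈ carrier, Prod.fst m = 0 → m = 0
  inj_right : ∀ m ∈ carrier, Prod.snd m = 0 → m = 0

/-- The pushout `V ⊕_{ν,ω} W` of a class of `𝐁(V,W)`. -/
abbrev Corr.po {V W : FDVec p} (c : Corr p V W) : FDVec p :=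
  FDVec.of p ((↥V × ↥W) ⧸ c.carrier)

/-- The canonical injection `ι_V : V → V ⊕_{ν,ω} W`. -/
def Corr.inl {V W : FDVec p} (c : Corr p V W) : V →ₗ[ZMod p] c.po :=
  c.carrier.mkQ ∘ₗ LinearMap.inl (ZMod p) ↥V ↥W

/-- The canonical injection `ι_W : W → V ⊕_{ν,ω} W`. -/
def Corr.inr {V W : FDVec p} (c : Corr p V W) : W →ₗ[ZMod p] c.po :=
  c.carrier.mkQ ∘ₗ LinearMap.inr (ZMod p) ↥V ↥W

theorem Corr.inl_injective {V W : FDVec p} (c : Corr p V W) :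
    Function.Injective c.inl := by
  intro a b hab
  have h : (Submodule.Quotient.mk ((a, 0) : ↥V × ↥W) : (↥V × ↥W) ⧸ c.carrier)
      = Submodule.Quotient.mk (b, 0) := hab
  have hmem : ((a, 0) : ↥V × ↥W) - (b, 0) ∈ c.carrier := by
    rwa [Submodule.Quotient.eq] at h
  have h2 := c.inj_right _ hmem (by simp)
  have h3 := congrArg Prod.fst h2
  simpa [sub_eq_zero] using h3

theorem Corr.inr_injective {V W : FDVec p} (c : Corr p V W) :
    Function.Injective c.inr := by
  intro a b hab
  have h : (Submodule.Quotient.mk ((0, a) : ↥V × ↥W) : (↥V × ↥W) ⧸ c.carrier)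
      = Submodule.Quotient.mk (0, b) := hab
  have hmem : ((0, a) : ↥V × ↥W) - (0, b) ∈ c.carrier := by
    rwa [Submodule.Quotient.eq] at h
  have h2 := c.inj_left _ hmem (by simp)
  have h3 := congrArg Prod.snd h2
  simpa [sub_eq_zero] using h3

/-- The fibre `σ_{(V,x)}F(W)` of `σ_V F(W) = ⊔_{𝐁(V,W)} F(V ⊕_{ν,ω} W)` over `x ∈ F(V)`. -/
def CentralFib (F : VIPresheaf p) (V : FDVec p) (x : F.obj V) (W : FDVec p) : Type :=
  Σ c : Corr p V W,
    {b : F.obj c.po // F.map (V := V) (W := c.po) c.inl c.inl_injective b = x}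

/-- The map `ρ_{F,(V,x)} : σ_{(V,x)}F(W) → F(W)`, sending `b` to `ι_W^* b`. -/
def centralMap (F : VIPresheaf p) (V : FDVec p) (x : F.obj V) (W : FDVec p) :
    CentralFib F V x W → F.obj W :=
  fun s => F.map (V := W) (W := Sigma.fst s |>.po) s.1.inr s.1.inr_injective s.2.1

/-- `(V, x)` is central for `F` if `ρ_{F,(V,x)}` is an isomorphism of presheaves. -/
def VIPresheaf.IsCentral (F : VIPresheaf p) (V : FDVec p) (x : F.obj V) : Prop :=
  ∀ W : FDVec p, Function.Bijective (centralMap F V x W)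

/-- The class of `𝐁(V, U)` associated with a pair of injections `δ : V → W`, `ε : U → W`:
its glue subspace is `ker(δ + ε) ⊆ V × U`. -/
def kerCorr {V U W : FDVec p} (δ : V →ₗ[ZMod p] W) (ε : U →ₗ[ZMod p] W)
    (hδ : Function.Injective δ) (hε : Function.Injective ε) : Corr p V U where
  carrier := LinearMap.ker (δ.coprod ε)
  inj_left := by
    intro m hm h1
    have hk : δ m.1 + ε m.2 = 0 := by simpa [LinearMap.mem_ker] using hm
    rw [h1] at hk
    simp only [map_zero, zero_add] at hk
    have h2 : m.2 = 0 := hε (by simpa using hk)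
    exact Prod.ext h1 h2
  inj_right := by
    intro m hm h2
    have hk : δ m.1 + ε m.2 = 0 := by simpa [LinearMap.mem_ker] using hm
    rw [h2] at hk
    simp only [map_zero, add_zero] at hk
    have h1 : m.1 = 0 := hδ (by simpa using hk)
    exact Prod.ext h1 h2

/-- The isomorphism `ε ↑ δ : V ⊕_{ν,μ} U ≃ δ(V) + ε(U)` of the first isomorphism theorem. -/
noncomputable def upArrow {V U W : FDVec p} (δ : V →ₗ[ZMod p] W) (ε : U →ₗ[ZMod p] W) :
    ((↥V × ↥U) ⧸ LinearMap.ker (δ.coprod ε)) ≃ₗ[ZMod p]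
      ↥(LinearMap.range δ ⊔ LinearMap.range ε : Submodule (ZMod p) W) :=
  (δ.coprod ε).quotKerEquivRange ≪≫ₗ LinearEquiv.ofEq _ _ (LinearMap.range_coprod δ ε)

/-- The class `[T, id_T, α] ∈ 𝐁(V, T)` associated with an injection `α : T → V`. -/
def idCorr {V T : FDVec p} (α : T →ₗ[ZMod p] V) (hα : Function.Injective α) :
    Corr p V T where
  carrier := LinearMap.range (α.prod (-(LinearMap.id : T →ₗ[ZMod p] T)))
  inj_left := by
    rintro m ⟨t, rfl⟩ h1
    simp only [LinearMap.prod_apply, Pi.prod, LinearMap.neg_apply, LinearMap.id_apply] at h1 ⊢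
    have ht : t = 0 := hα (by simpa using h1)
    simp [ht]
  inj_right := by
    rintro m ⟨t, rfl⟩ h2
    simp only [LinearMap.prod_apply, Pi.prod, LinearMap.neg_apply, LinearMap.id_apply] at h2 ⊢
    have ht : t = 0 := by simpa [neg_eq_zero] using h2
    simp [ht]

/-!
Write `ε = ι ∘ ε̃` with `ε̃ : V ≃ Im ε` the corestriction. An isomorphism `α : Im ζ ≃ Im ε` with
`α ∘ ζ̃ = ε̃` always exists. Since `ζ̃^*` is injective, the condition `α^* ι^* φ_j = ι^* φ_i` for
`α` to lie in the groupoid can be tested after applying `ζ̃^*`, where it becomes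
`ε^* φ_j = ζ^* φ_i`. So `∼` is exactly the kernel relation of `ε ↦ ε^* φ_i`, and this map is `q_F`
by the Yoneda lemma, hence surjective.
-/

section RangeEquivRange

variable {R M N N' : Type*} [Semiring R] [AddCommMonoid M] [AddCommMonoid N]
  [AddCommMonoid N'] [Module R M] [Module R N] [Module R N']

/-- The isomorphism `Im f ≃ Im g`, `f m ↦ g m`, between the images of two injective linear maps
with the same source, used to relate `f` and `g` in a groupoid of subspaces. -/
noncomputable def rangeEquivRange (f : M →ₗ[R] N) (hf : Function.Injective f)
    (g : M →ₗ[R] N') (hg : Function.Injective g) : LinearMap.range f ≃ₗ[R] LinearMap.range g :=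
  (LinearEquiv.ofInjective f hf).symm ≪≫ₗ LinearEquiv.ofInjective g hg

theorem coe_rangeEquivRange_rangeRestrict (f : M →ₗ[R] N) (hf : Function.Injective f)
    (g : M →ₗ[R] N') (hg : Function.Injective g) (m : M) :
    (rangeEquivRange f hf g hg (f.rangeRestrict m) : N') = g m :=
  congrArg g ((LinearEquiv.ofInjective f hf).symm_apply_apply m)

end RangeEquivRange

namespace VIPresheaf

variable (F : VIPresheaf p)

theorem map_map_of_comp_eq {T V X : FDVec p} {f : T →ₗ[ZMod p] V} {g : V →ₗ[ZMod p] X}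
    {h : T →ₗ[ZMod p] X} (hf : Function.Injective f) (hg : Function.Injective g)
    (hh : Function.Injective h) (hgf : g ∘ₗ f = h) (x : F.obj X) :
    F.map f hf (F.map g hg x) = F.map h hh x := by
  subst hgf
  exact (F.map_comp f hf g hg hh x).symm

theorem map_equiv_injective {V X : FDVec p} (e : V ≃ₗ[ZMod p] X) :
    Function.Injective (F.map e.toLinearMap e.injective) :=
  Function.LeftInverse.injective (g := F.map e.symm.toLinearMap e.symm.injective) fun x =>
    calc F.map e.symm.toLinearMap e.symm.injective (F.map e.toLinearMap e.injective x)
        = F.map LinearMap.id (linearMap_id_injective X) x :=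
          F.map_map_of_comp_eq _ _ _ e.comp_symm x
      _ = x := F.map_id X _ x

end VIPresheaf

namespace GenFamily

variable {ι : Type} {W : ι → FDVec p} {F : VIPresheaf p} (Q : GenFamily W F)

theorem map_phi {V : FDVec p} {i : ι} (f : V →ₗ[ZMod p] W i) (hf : Function.Injective f) :
    F.map f hf (Q.phi i) = Q.q V i f hf :=
  (Q.natural V (W i) f hf i LinearMap.id (linearMap_id_injective _) hf).symm

theorem exists_map_phi_eq {V : FDVec p} (z : F.obj V) :
    ∃ x : InjHom V W, F.map x.2.1 x.2.2 (Q.phi x.1) = z := by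
  obtain ⟨i, f, hf, hz⟩ := Q.surjective V z
  exact ⟨⟨i, f, hf⟩, (Q.map_phi f hf).trans hz⟩

theorem mem_mor_iff_map_phi_eq {V : FDVec p} {i j : ι} {U : Submodule (ZMod p) (W i)}
    {U' : Submodule (ZMod p) (W j)} {f : V →ₗ[ZMod p] W i} {g : V →ₗ[ZMod p] W j}
    (hf : Function.Injective f) (hg : Function.Injective g) (e : V ≃ₗ[ZMod p] U)
    (α : U ≃ₗ[ZMod p] U') (hef : U.subtype ∘ₗ e.toLinearMap = f)
    (hαg : U'.subtype ∘ₗ α.toLinearMap ∘ₗ e.toLinearMap = g) :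
    α ∈ Q.mor i j U U' ↔ F.map f hf (Q.phi i) = F.map g hg (Q.phi j) := by
  have map_e_source : F.map (W := subFD U) e.toLinearMap e.injective
      (F.map (V := subFD U) U.subtype U.injective_subtype (Q.phi i)) = F.map f hf (Q.phi i) :=
    F.map_map_of_comp_eq (V := subFD U) _ _ hf hef _
  have map_e_target : F.map (W := subFD U) e.toLinearMap e.injective
      (F.map (V := subFD U) (W := subFD U') α.toLinearMap α.injective
        (F.map (V := subFD U') U'.subtype U'.injective_subtype (Q.phi j))) =
      F.map g hg (Q.phi j) := by
    rw [F.map_map_of_comp_eq (T := V) (V := subFD U) (X := subFD U') _ _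
      (α.injective.comp e.injective) rfl]
    exact F.map_map_of_comp_eq (V := subFD U') _ _ hg hαg _
  rw [← map_e_source, ← map_e_target, (F.map_equiv_injective (X := subFD U) e).eq_iff]
  exact eq_comm

theorem gRel_iff_map_phi_eq {V : FDVec p} (x y : InjHom V W) :
    Q.GRel V x y ↔ F.map x.2.1 x.2.2 (Q.phi x.1) = F.map y.2.1 y.2.2 (Q.phi y.1) := by
  obtain ⟨i, f, hf⟩ := x
  obtain ⟨j, g, hg⟩ := y
  have mem_mor_iff (α : LinearMap.range f ≃ₗ[ZMod p] LinearMap.range g)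
      (hα : ∀ v, (α (f.rangeRestrict v) : W j) = g v) :
      α ∈ Q.mor i j _ _ ↔ F.map f hf (Q.phi i) = F.map g hg (Q.phi j) :=
    Q.mem_mor_iff_map_phi_eq hf hg (LinearEquiv.ofInjective f hf) α rfl (LinearMap.ext hα)
  constructor
  · rintro ⟨α, hmem, hα⟩
    exact (mem_mor_iff α hα).1 hmem
  · intro h
    have hα := coe_rangeEquivRange_rangeRestrict f hf g hg
    exact ⟨rangeEquivRange f hf g hg, (mem_mor_iff _ hα).2 h, hα⟩

end GenFamily

/-- Let `(F, q_F)` be an object of `_{(W_i)}Set^{(𝒱I)ᵒᵖ}`.  The map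
sending the class `[ε]_{𝒢_{(F,q_F)}}` of `ε ∈ Hom_{𝒱I}(V, W_i)` to `ε^* φ_i ∈ F(V)` is
well defined and a bijection from `⊔_i Hom_{𝒱I}(V, W_i)/∼_{𝒢_{(F,q_F)}}` onto `F(V)`,
naturally in `V`; so `F ≅ ⊔_i Hom_{𝒱I}(−, W_i)/∼_{𝒢_{(F,q_F)}}` compatibly with the
surjections from `⊔_i Hom_{𝒱I}(−, W_i)`.  (Well-definedness, injectivity on classes,
surjectivity and naturality are stated separately.) -/
theorem statement_1 {p : ℕ} [Fact p.Prime] {ι : Type} (W : ι → FDVec p)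
    (F : VIPresheaf p) (Q : GenFamily W F) (V : FDVec p) :
    (∀ x y : InjHom V W, Q.GRel V x y →
        F.map x.2.1 x.2.2 (Q.phi x.1) = F.map y.2.1 y.2.2 (Q.phi y.1)) ∧
    (∀ x y : InjHom V W,
        F.map x.2.1 x.2.2 (Q.phi x.1) = F.map y.2.1 y.2.2 (Q.phi y.1) → Q.GRel V x y) ∧
    (∀ z : F.obj V, ∃ x : InjHom V W, F.map x.2.1 x.2.2 (Q.phi x.1) = z) ∧
    (∀ (T : FDVec p) (β : T →ₗ[ZMod p] V) (hβ : Function.Injective β) (x : InjHom V W),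
        F.map (x.2.1 ∘ₗ β) (comp_injective β x.2.1 hβ x.2.2) (Q.phi x.1)
          = F.map β hβ (F.map x.2.1 x.2.2 (Q.phi x.1))) :=
  ⟨fun x y => (Q.gRel_iff_map_phi_eq x y).1,
    fun x y => (Q.gRel_iff_map_phi_eq x y).2,
    Q.exists_map_phi_eq,
    fun _ β hβ x => F.map_comp β hβ x.2.1 x.2.2 _ _⟩

end Paper
end

section
/- Let 𝒢 be a groupoid whose objects are the pairs (U,i) with U a subspace of W_i, whose morphisms are linear isomorphisms, and which has the restriction property. Then V ↦ ⊔_{i∈I} Hom_{𝒱I}(V,W_i)/∼_𝒢 defines a presheaf on 𝒱I; that is, if ζ : V → W_i and ρ : V → W_j are injective linear maps with ζ ∼_𝒢 ρ, and β : T → V is an injective linear map, then ζ∘β ∼_𝒢 ρ∘β. Moreover, this presheaf is connected (its value at the zero vector space is a singleton) if and only if for all (i,j) ∈ I², the unique linear map 0 → 0 belongs to 𝒢(0 ⊆ W_i, 0 ⊆ W_j). -/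
set_option maxHeartbeats 1000000

namespace Paper

variable {p : ℕ} [Fact p.Prime]

/-! Two injections `ζ : V → W_i` and `ρ : V → W_j` are related by at most one isomorphism
`Im ζ ≃ Im ρ`, namely `ρ̃ ∘ ζ̃⁻¹`, so `ζ ∼_𝒢 ρ` says that this isomorphism lies in `𝒢`.
Precomposing with `β` replaces it by its restriction to `Im (ζ ∘ β)`, which lies in `𝒢` by the
restriction property. If `V = 0`, it is the unique isomorphism between the zero subspaces of
`W_i` and `W_j`. -/

section RangeEquiv

open Function

variable {R V M N : Type*} [Semiring R] [AddCommMonoid V] [Module R V]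
  [AddCommMonoid M] [Module R M] [AddCommMonoid N] [Module R N]
  {f : V →ₗ[R] M} {g : V →ₗ[R] N}

/-- The isomorphism `g̃ ∘ f̃⁻¹ : Im f ≃ Im g` between the images of two injective maps with the
same source, where `f̃` and `g̃` are the corestrictions to the images. -/
noncomputable def rangeEquiv (hf : Injective f) (hg : Injective g) :
    LinearMap.range f ≃ₗ[R] LinearMap.range g :=
  (LinearEquiv.ofInjective f hf).symm ≪≫ₗ LinearEquiv.ofInjective g hg

theorem coe_rangeEquiv_rangeRestrict (hf : Injective f) (hg : Injective g) (v : V) :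
    (rangeEquiv hf hg (f.rangeRestrict v) : N) = g v :=
  congrArg g ((LinearEquiv.ofInjective f hf).symm_apply_apply v)

theorem eq_rangeEquiv_iff (hf : Injective f) (hg : Injective g)
    {α : LinearMap.range f ≃ₗ[R] LinearMap.range g} :
    α = rangeEquiv hf hg ↔ ∀ v, (α (f.rangeRestrict v) : N) = g v := by
  constructor
  · rintro rfl v
    exact coe_rangeEquiv_rangeRestrict hf hg v
  · intro h
    ext u
    obtain ⟨v, rfl⟩ := f.surjective_rangeRestrict u
    rw [h, coe_rangeEquiv_rangeRestrict]

end RangeEquiv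

theorem restrictImg_eq_of_coe_eq {Wi Wj : FDVec p} {U M : Submodule (ZMod p) Wi}
    {U' M' : Submodule (ZMod p) Wj} {α : U ≃ₗ[ZMod p] U'} {γ : M ≃ₗ[ZMod p] M'} (hMU : M ≤ U)
    (h : ∀ m, (γ m : Wj) = α (Submodule.inclusion hMU m)) :
    restrictImg α hMU = M' := by
  have hγ : restrictMap α hMU = M'.subtype ∘ₗ γ.toLinearMap :=
    LinearMap.ext fun m => (h m).symm
  rw [restrictImg, hγ, LinearEquiv.range_comp, Submodule.range_subtype]

/-- The action `ζ ↦ ζ ∘ β` of an injective map `β : T → V` on `⊔_i Hom_{𝒱I}(-, W i)`. -/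
def InjHom.precomp {T V : FDVec p} {ι : Type} {W : ι → FDVec p} (ζ : InjHom V W)
    (β : T →ₗ[ZMod p] V) (hβ : Function.Injective β) : InjHom T W :=
  ⟨ζ.1, ζ.2.1 ∘ₗ β, comp_injective β ζ.2.1 hβ ζ.2.2⟩

namespace SubGroupoid

variable {ι : Type} {W : ι → FDVec p} {G : SubGroupoid W} {V : FDVec p}

section Membership

variable {i j : ι} {U M : Submodule (ZMod p) (W i)} {U' M' : Submodule (ZMod p) (W j)}
  {α : U ≃ₗ[ZMod p] U'} {γ : M ≃ₗ[ZMod p] M'}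

theorem mem_mor_congr (hU : M = U) (hU' : M' = U')
    (h : ∀ m : M, (γ m : W j) = α (Submodule.inclusion hU.le m)) :
    γ ∈ G.mor i j M M' ↔ α ∈ G.mor i j U U' := by
  subst hU hU'
  have hγα : γ = α := LinearEquiv.ext fun m => Subtype.ext (h m)
  rw [hγα]

theorem mem_mor_iff_of_eq_bot (hM : M = ⊥) (hM' : M' = ⊥)
    (α : (⊥ : Submodule (ZMod p) (W i)) ≃ₗ[ZMod p] (⊥ : Submodule (ZMod p) (W j))) :
    γ ∈ G.mor i j M M' ↔ α ∈ G.mor i j ⊥ ⊥ := by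
  refine mem_mor_congr hM hM' fun m => ?_
  have hγ : (γ m : W j) = 0 := (Submodule.eq_bot_iff M').1 hM' _ (γ m).2
  rw [hγ, Subsingleton.elim (Submodule.inclusion hM.le m) 0, map_zero, Submodule.coe_zero]

theorem HasRestriction.mem_mor_of_le (hG : G.HasRestriction) (hα : α ∈ G.mor i j U U')
    (hMU : M ≤ U) (h : ∀ m, (γ m : W j) = α (Submodule.inclusion hMU m)) :
    γ ∈ G.mor i j M M' :=
  (mem_mor_congr rfl (restrictImg_eq_of_coe_eq hMU h).symm h).2 (hG i j U U' α hα M hMU)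

end Membership

theorem rel_iff_rangeEquiv_mem_mor {ζ ρ : InjHom V W} :
    G.Rel V ζ ρ ↔ rangeEquiv ζ.2.2 ρ.2.2 ∈
      G.mor ζ.1 ρ.1 (LinearMap.range ζ.2.1) (LinearMap.range ρ.2.1) := by
  simp only [Rel, ← eq_rangeEquiv_iff ζ.2.2 ρ.2.2, exists_eq_right]

theorem Rel.precomp (hG : G.HasRestriction) {T : FDVec p} {ζ ρ : InjHom V W}
    (h : G.Rel V ζ ρ) (β : T →ₗ[ZMod p] V) (hβ : Function.Injective β) :
    G.Rel T (ζ.precomp β hβ) (ρ.precomp β hβ) := by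
  rw [rel_iff_rangeEquiv_mem_mor] at h ⊢
  refine hG.mem_mor_of_le h (LinearMap.range_comp_le_range β ζ.2.1) fun u => ?_
  obtain ⟨t, rfl⟩ := (ζ.precomp β hβ).2.1.surjective_rangeRestrict u
  exact (coe_rangeEquiv_rangeRestrict (ζ.precomp β hβ).2.2 (ρ.precomp β hβ).2.2 t).trans
    (coe_rangeEquiv_rangeRestrict ζ.2.2 ρ.2.2 (β t)).symm

theorem rel_iff_mem_mor_bot [Subsingleton V] {ζ ρ : InjHom V W}
    (α : (⊥ : Submodule (ZMod p) (W ζ.1)) ≃ₗ[ZMod p] (⊥ : Submodule (ZMod p) (W ρ.1))) :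
    G.Rel V ζ ρ ↔ α ∈ G.mor ζ.1 ρ.1 ⊥ ⊥ :=
  rel_iff_rangeEquiv_mem_mor.trans <|
    mem_mor_iff_of_eq_bot (LinearMap.range_eq_bot.2 (Subsingleton.elim _ _))
      (LinearMap.range_eq_bot.2 (Subsingleton.elim _ _)) α

end SubGroupoid

/-- The zero map `V → W i` from the zero space, as an element of `⊔_i Hom_{𝒱I}(V, W i)`. -/
def InjHom.zero (V : FDVec p) [Subsingleton V] {ι : Type} (W : ι → FDVec p) (i : ι) :
    InjHom V W :=
  ⟨i, 0, Function.injective_of_subsingleton _⟩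

theorem SubGroupoid.forall_rel_iff_forall_mem_mor_bot {ι : Type} {W : ι → FDVec p}
    {G : SubGroupoid W} {V : FDVec p} [Subsingleton V] :
    (∀ ζ ρ : InjHom V W, G.Rel V ζ ρ) ↔
      ∀ (i j : ι) (α : (⊥ : Submodule (ZMod p) (W i)) ≃ₗ[ZMod p]
        (⊥ : Submodule (ZMod p) (W j))), α ∈ G.mor i j ⊥ ⊥ :=
  ⟨fun h i j α => (rel_iff_mem_mor_bot α).1 (h (InjHom.zero V W i) (InjHom.zero V W j)),
    fun h ζ ρ => (rel_iff_mem_mor_bot 0).2 (h ζ.1 ρ.1 0)⟩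

/-- Let `𝒢` be a groupoid on subspaces of the `W_i` with the restriction
property.  Then `V ↦ ⊔_i Hom_{𝒱I}(V, W_i)/∼_𝒢` defines a presheaf on `𝒱I`: the relation
`∼_𝒢` is compatible with precomposition by injective linear maps.  Moreover, this presheaf
is connected (its value at the zero vector space is a singleton) if and only if for all
`(i,j) ∈ I²` the unique linear map `0 → 0` belongs to `𝒢(0 ⊆ W_i, 0 ⊆ W_j)`. -/
theorem statement_3 {p : ℕ} [Fact p.Prime] {ι : Type} [Nonempty ι] (W : ι → FDVec p)
    (G : SubGroupoid W) (hG : G.HasRestriction) :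
    (∀ (T V : FDVec p) (β : T →ₗ[ZMod p] V) (hβ : Function.Injective β)
        (ζ ρ : InjHom V W), G.Rel V ζ ρ →
        G.Rel T ⟨ζ.1, ζ.2.1 ∘ₗ β, comp_injective β ζ.2.1 hβ ζ.2.2⟩
                ⟨ρ.1, ρ.2.1 ∘ₗ β, comp_injective β ρ.2.1 hβ ρ.2.2⟩) ∧
    (∀ V₀ : FDVec p, (∀ v : ↥V₀, v = 0) →
      ((Nonempty (InjHom V₀ W) ∧ ∀ ζ ρ : InjHom V₀ W, G.Rel V₀ ζ ρ) ↔
        (∀ i j : ι,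
          ∀ α : ↥(⊥ : Submodule (ZMod p) (W i)) ≃ₗ[ZMod p] ↥(⊥ : Submodule (ZMod p) (W j)),
            α ∈ G.mor i j ⊥ ⊥))) := by
  refine ⟨fun T V β hβ ζ ρ h => h.precomp hG β hβ, fun V₀ hV₀ => ?_⟩
  have : Subsingleton V₀ := subsingleton_of_forall_eq 0 hV₀
  have hne : Nonempty (InjHom V₀ W) := ⟨InjHom.zero V₀ W (Classical.arbitrary ι)⟩
  exact (and_iff_right hne).trans SubGroupoid.forall_rel_iff_forall_mem_mor_bot

end Paper
end

section
/- Let V, W, T be finite-dimensional 𝔽_p-vector spaces, let [M,ν,ω] ∈ 𝐁(V,W) and let [M',g,τ] ∈ 𝐁(V⊕_{ν,ω}W, T). Then there exist a class [N,ω',τ'] ∈ 𝐁(W,T), a class [N',ν',g'] ∈ 𝐁(V, W⊕_{ω',τ'}T), and an isomorphism ζ : (V⊕_{ν,ω}W)⊕_{g,τ}T → V⊕_{ν',g'}(W⊕_{ω',τ'}T) such that the composites of ζ with the canonical injections of V, W and T into (V⊕_{ν,ω}W)⊕_{g,τ}T are equal to the canonical injections of V, W and T into V⊕_{ν',g'}(W⊕_{ω',τ'}T).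 -/
set_option maxHeartbeats 1000000

namespace Paper

variable {p : ℕ} [Fact p.Prime]

/-! Inside `P = (V ⊕ W) ⊕ T` the three summands are embedded and together span. Conversely, whenever
`V`, `W` and `T` embed into a module `P` and span it, `W` and `T` glued along their overlap in `P`
form the submodule `W + T`, and `V` glued to that submodule along their overlap is all of `P`.
-/

section

variable {R V W T P : Type*} [Ring R] [AddCommGroup V] [Module R V] [AddCommGroup W] [Module R W]
  [AddCommGroup T] [Module R T] [AddCommGroup P] [Module R P]

/-- The submodules `{(ν m, -ω m)}` of `V × W` arising from a span `V ← M → W` of injective linear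
maps `ν` and `ω`, over any ring. As in `Corr`, a class in `𝐁(V, W)` is encoded by this submodule. -/
structure IsGlue (G : Submodule R (V × W)) : Prop where
  inj_left : ∀ m ∈ G, m.1 = 0 → m = 0
  inj_right : ∀ m ∈ G, m.2 = 0 → m = 0

/-- The amalgamated sum (pushout) of `V` and `W` along the span encoded by `G`. -/
abbrev AmalgSum (G : Submodule R (V × W)) : Type _ := (V × W) ⧸ G

namespace AmalgSum

/-- The canonical map from the left summand to the amalgamated sum. -/
def inl (G : Submodule R (V × W)) : V →ₗ[R] AmalgSum G := G.mkQ ∘ₗ LinearMap.inl R V W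

/-- The canonical map from the right summand to the amalgamated sum. -/
def inr (G : Submodule R (V × W)) : W →ₗ[R] AmalgSum G := G.mkQ ∘ₗ LinearMap.inr R V W

theorem range_inl_sup_range_inr (G : Submodule R (V × W)) :
    LinearMap.range (inl G) ⊔ LinearMap.range (inr G) = ⊤ := by
  rw [inl, inr, LinearMap.range_comp, LinearMap.range_comp, ← Submodule.map_sup,
    LinearMap.sup_range_inl_inr, Submodule.map_top, Submodule.range_mkQ]

/-- The map to `P` induced by `i : V → P` and `j : W → P` on the sum of `V` and `W` amalgamated
along their overlap in `P`, which is encoded by the kernel of `i + j : V × W → P`. -/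
def kerDesc (i : V →ₗ[R] P) (j : W →ₗ[R] P) : AmalgSum (LinearMap.ker (i.coprod j)) →ₗ[R] P :=
  (LinearMap.ker (i.coprod j)).liftQ (i.coprod j) le_rfl

theorem kerDesc_inl (i : V →ₗ[R] P) (j : W →ₗ[R] P) (v : V) : kerDesc i j (inl _ v) = i v := by
  simp [kerDesc, inl]

theorem kerDesc_inr (i : V →ₗ[R] P) (j : W →ₗ[R] P) (w : W) : kerDesc i j (inr _ w) = j w := by
  simp [kerDesc, inr]

theorem kerDesc_injective (i : V →ₗ[R] P) (j : W →ₗ[R] P) : Function.Injective (kerDesc i j) :=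
  LinearMap.ker_eq_bot.mp (Submodule.ker_liftQ_eq_bot _ _ le_rfl le_rfl)

theorem range_kerDesc (i : V →ₗ[R] P) (j : W →ₗ[R] P) :
    LinearMap.range (kerDesc i j) = LinearMap.range i ⊔ LinearMap.range j := by
  rw [kerDesc, Submodule.range_liftQ, LinearMap.range_coprod]

end AmalgSum

namespace IsGlue

open AmalgSum

theorem inl_injective {G : Submodule R (V × W)} (hG : IsGlue G) :
    Function.Injective (inl G) := by
  refine (injective_iff_map_eq_zero (inl G)).mpr fun v hv => ?_
  have hmem : (v, 0) ∈ G := (Submodule.Quotient.mk_eq_zero G).mp hv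
  exact congrArg Prod.fst (hG.inj_right _ hmem rfl)

theorem inr_injective {G : Submodule R (V × W)} (hG : IsGlue G) :
    Function.Injective (inr G) := by
  refine (injective_iff_map_eq_zero (inr G)).mpr fun w hw => ?_
  have hmem : (0, w) ∈ G := (Submodule.Quotient.mk_eq_zero G).mp hw
  exact congrArg Prod.snd (hG.inj_left _ hmem rfl)

theorem ker_coprod {i : V →ₗ[R] P} {j : W →ₗ[R] P} (hi : Function.Injective i)
    (hj : Function.Injective j) : IsGlue (LinearMap.ker (i.coprod j)) where
  inj_left := by
    rintro ⟨v, w⟩ hm rfl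
    have hw : j w = 0 := by simpa using hm
    rw [(map_eq_zero_iff j hj).mp hw, Prod.mk_zero_zero]
  inj_right := by
    rintro ⟨v, w⟩ hm rfl
    have hv : i v = 0 := by simpa using hm
    rw [(map_eq_zero_iff i hi).mp hv, Prod.mk_zero_zero]

end IsGlue

open AmalgSum

theorem exists_equiv_amalgSum_amalgSum {i : V →ₗ[R] P} {j : W →ₗ[R] P} {k : T →ₗ[R] P}
    (hi : Function.Injective i) (hj : Function.Injective j) (hk : Function.Injective k)
    (hspan : LinearMap.range i ⊔ LinearMap.range j ⊔ LinearMap.range k = ⊤) :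
    ∃ (H : Submodule R (W × T)) (K : Submodule R (V × AmalgSum H)) (ζ : P ≃ₗ[R] AmalgSum K),
      IsGlue H ∧ IsGlue K ∧ (∀ v, ζ (i v) = inl K v) ∧ (∀ w, ζ (j w) = inr K (inl H w)) ∧
        ∀ t, ζ (k t) = inr K (inr H t) := by
  let g := kerDesc j k
  have hg : Function.Injective g := kerDesc_injective j k
  have hsurj : Function.Surjective (kerDesc i g) := by
    rw [← LinearMap.range_eq_top, range_kerDesc, range_kerDesc, ← sup_assoc, hspan]
  let e := LinearEquiv.ofBijective (kerDesc i g) ⟨kerDesc_injective i g, hsurj⟩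
  have he_inl (v : V) : e (inl _ v) = i v := kerDesc_inl i g v
  have he_inr (x) : e (inr _ x) = g x := kerDesc_inr i g x
  refine ⟨_, _, e.symm, .ker_coprod hj hk, .ker_coprod hi hg,
    fun v => ?_, fun w => ?_, fun t => ?_⟩ <;> rw [LinearEquiv.symm_apply_eq]
  · rw [he_inl]
  · rw [he_inr, kerDesc_inl]
  · rw [he_inr, kerDesc_inr]

theorem statement_6_general {G₁ : Submodule R (V × W)} {G₂ : Submodule R (AmalgSum G₁ × T)}
    (h₁ : IsGlue G₁) (h₂ : IsGlue G₂) :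
    ∃ (G₃ : Submodule R (W × T)) (G₄ : Submodule R (V × AmalgSum G₃))
      (ζ : AmalgSum G₂ ≃ₗ[R] AmalgSum G₄), IsGlue G₃ ∧ IsGlue G₄ ∧
        (∀ v, ζ (inl G₂ (inl G₁ v)) = inl G₄ v) ∧
        (∀ w, ζ (inl G₂ (inr G₁ w)) = inr G₄ (inl G₃ w)) ∧
        ∀ t, ζ (inr G₂ t) = inr G₄ (inr G₃ t) := by
  have hspan : LinearMap.range (inl G₂ ∘ₗ inl G₁) ⊔ LinearMap.range (inl G₂ ∘ₗ inr G₁) ⊔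
      LinearMap.range (inr G₂) = ⊤ := by
    rw [LinearMap.range_comp, LinearMap.range_comp, ← Submodule.map_sup,
      range_inl_sup_range_inr, Submodule.map_top, range_inl_sup_range_inr]
  exact exists_equiv_amalgSum_amalgSum (i := inl G₂ ∘ₗ inl G₁) (j := inl G₂ ∘ₗ inr G₁)
    (h₂.inl_injective.comp h₁.inl_injective)
    (h₂.inl_injective.comp h₁.inr_injective) h₂.inr_injective hspan

end

theorem Corr.isGlue {V W : FDVec p} (c : Corr p V W) : IsGlue c.carrier :=
  ⟨c.inj_left, c.inj_right⟩

/-- **Statement 6.** (Associativity of amalgamated sums.)  Given a class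
`[M,ν,ω] ∈ 𝐁(V,W)` (represented by `c₁`) and a class `[M',g,τ] ∈ 𝐁(V ⊕_{ν,ω} W, T)`
(represented by `c₂`), there exist a class `[N,ω',τ'] ∈ 𝐁(W,T)` (represented by `c₃`),
a class `[N',ν',g'] ∈ 𝐁(V, W ⊕_{ω',τ'} T)` (represented by `c₄`) and an isomorphism
`ζ : (V ⊕_{ν,ω} W) ⊕_{g,τ} T ≃ V ⊕_{ν',g'} (W ⊕_{ω',τ'} T)` compatible with the
canonical injections of `V`, `W` and `T`. -/
theorem statement_6 {p : ℕ} [Fact p.Prime] (V W T : FDVec p)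
    (c₁ : Corr p V W) (c₂ : Corr p c₁.po T) :
    ∃ (c₃ : Corr p W T) (c₄ : Corr p V c₃.po) (ζ : ↥c₂.po ≃ₗ[ZMod p] ↥c₄.po),
      (∀ v : ↥V, ζ (c₂.inl (c₁.inl v)) = c₄.inl v) ∧
      (∀ w : ↥W, ζ (c₂.inl (c₁.inr w)) = c₄.inr (c₃.inl w)) ∧
      (∀ t : ↥T, ζ (c₂.inr t) = c₄.inr (c₃.inr t)) := by
  obtain ⟨G₃, G₄, ζ, h₃, h₄, hζ⟩ := statement_6_general c₁.isGlue c₂.isGlue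
  exact ⟨⟨G₃, h₃.inj_left, h₃.inj_right⟩, ⟨G₄, h₄.inj_left, h₄.inj_right⟩, ζ, hζ⟩

end Paper
end

section
/- Let F be a presheaf on 𝒱I, V a finite-dimensional 𝔽_p-vector space and x ∈ F(V) such that (V,x) is central for F. Then for every injective linear map α : T → V, the pair (T, α^*x) is central for F. -/
set_option maxHeartbeats 1000000

namespace Paper

variable {p : ℕ} [Fact p.Prime]

/-!
An injection `α : T → V` induces a map `R : σ_{(V,x)}F(W) → σ_{(T,α^*x)}F(W)`, restricting
`b ∈ F(V ⊕_{ν,ω} W)` to the span of `T` and `W`, and `ρ_{(T,α^*x)} ∘ R = ρ_{(V,x)}`.  If `(V,x)`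
is central, the right-hand side is bijective, so it is enough that `R` be surjective.  To lift
`b ∈ F(T ⊕ W)` (a pushout), use surjectivity of `ρ_{(V,x)}` at `T ⊕ W` to extend `b` to an
element `e` restricting to `x` on `V`.  This `e` restricts to `α^*x` on `T` in two ways, through
`V` and through `T ⊕ W`, and injectivity of `ρ_{(V,x)}` at `T` forces the two embeddings of `T` to
coincide; hence the restriction of `e` to the span of `V` and `W` is a lift of `b`.
-/

theorem VIPresheaf.map_map_of_comp_eq_s8 (F : VIPresheaf p) {V W X : FDVec p}
    {f : V →ₗ[ZMod p] W} {g : W →ₗ[ZMod p] X} {k : V →ₗ[ZMod p] X} (h : g ∘ₗ f = k)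
    (hf : Function.Injective f) (hg : Function.Injective g) (hk : Function.Injective k)
    (x : F.obj X) : F.map f hf (F.map g hg x) = F.map k hk x := by
  subst h
  exact (F.map_comp f hf g hg hk x).symm

section Cospan

variable {V W X : FDVec p} {δ : V →ₗ[ZMod p] X} {ε : W →ₗ[ZMod p] X}

theorem Corr.coprod_comp_inl_inr (c : Corr p V W) (g : c.po →ₗ[ZMod p] X) :
    (g ∘ₗ c.inl).coprod (g ∘ₗ c.inr) = g ∘ₗ c.carrier.mkQ :=
  LinearMap.coprod_comp_inl_inr (g ∘ₗ c.carrier.mkQ)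

theorem Corr.ker_coprod_comp_inl_inr (c : Corr p V W) {g : c.po →ₗ[ZMod p] X}
    (hg : Function.Injective g) :
    LinearMap.ker ((g ∘ₗ c.inl).coprod (g ∘ₗ c.inr)) = c.carrier := by
  rw [c.coprod_comp_inl_inr, LinearMap.ker_comp_of_ker_eq_bot _ (LinearMap.ker_eq_bot.2 hg),
    Submodule.ker_mkQ]

theorem Corr.linearMap_ext {c : Corr p V W} {g g' : c.po →ₗ[ZMod p] X}
    (hl : g ∘ₗ c.inl = g' ∘ₗ c.inl) (hr : g ∘ₗ c.inr = g' ∘ₗ c.inr) : g = g' :=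
  Submodule.linearMap_qext _ (by simp only [← c.coprod_comp_inl_inr, hl, hr])

theorem Corr.eq_of_comp_eq {c c' : Corr p V W} {g : c.po →ₗ[ZMod p] X} {g' : c'.po →ₗ[ZMod p] X}
    (hg : Function.Injective g) (hg' : Function.Injective g')
    (hl : g ∘ₗ c.inl = g' ∘ₗ c'.inl) (hr : g ∘ₗ c.inr = g' ∘ₗ c'.inr) : c = c' := by
  have hcarrier : c.carrier = c'.carrier := by
    rw [← c.ker_coprod_comp_inl_inr hg, ← c'.ker_coprod_comp_inl_inr hg', hl, hr]
  cases c
  cases c'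
  cases hcarrier
  rfl

variable (hδ : Function.Injective δ) (hε : Function.Injective ε)

/-- The map `V ⊕_{ν,ω} W → X` induced by a cospan `V → X ← W` of injections, where
`[M,ν,ω] ∈ 𝐁(V,W)` is the class given by the intersection `M` of `V` and `W` in `X`. -/
def kerCorrDesc : (kerCorr δ ε hδ hε).po →ₗ[ZMod p] X :=
  (kerCorr δ ε hδ hε).carrier.liftQ (δ.coprod ε) le_rfl

theorem kerCorrDesc_injective : Function.Injective (kerCorrDesc hδ hε) :=
  LinearMap.ker_eq_bot.1 (Submodule.ker_liftQ_eq_bot _ _ _ le_rfl)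

theorem kerCorrDesc_comp_inl : kerCorrDesc hδ hε ∘ₗ (kerCorr δ ε hδ hε).inl = δ :=
  LinearMap.coprod_inl δ ε

theorem kerCorrDesc_comp_inr : kerCorrDesc hδ hε ∘ₗ (kerCorr δ ε hδ hε).inr = ε :=
  LinearMap.coprod_inr δ ε

end Cospan

namespace CentralFib

theorem eq_of_map_eq {F : VIPresheaf p} {V W X : FDVec p} {x : F.obj V} {s s' : CentralFib F V x W}
    {g : s.1.po →ₗ[ZMod p] X} {g' : s'.1.po →ₗ[ZMod p] X}
    (hg : Function.Injective g) (hg' : Function.Injective g')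
    (hl : g ∘ₗ s.1.inl = g' ∘ₗ s'.1.inl) (hr : g ∘ₗ s.1.inr = g' ∘ₗ s'.1.inr) {e : F.obj X}
    (hs : F.map g hg e = s.2.1) (hs' : F.map g' hg' e = s'.2.1) : s = s' := by
  obtain ⟨c, b⟩ := s
  obtain ⟨c', b'⟩ := s'
  obtain rfl : c = c' := Corr.eq_of_comp_eq hg hg' hl hr
  obtain rfl : g = g' := Corr.linearMap_ext hl hr
  exact Sigma.ext rfl (heq_of_eq (Subtype.ext (hs.symm.trans hs')))

section OfCospan

variable {F : VIPresheaf p} {V W X : FDVec p} {x : F.obj V}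
  {δ : V →ₗ[ZMod p] X} {ε : W →ₗ[ZMod p] X}
  (hδ : Function.Injective δ) (hε : Function.Injective ε) {e : F.obj X} (he : F.map δ hδ e = x)

/-- The element of `σ_{(V,x)}F(W)` given by a cospan `V → X ← W` of injections and an `e ∈ F(X)`
restricting to `x` on `V`: the restriction of `e` to the span of `V` and `W` in `X`. -/
def ofCospan : CentralFib F V x W :=
  ⟨kerCorr δ ε hδ hε, F.map (kerCorrDesc hδ hε) (kerCorrDesc_injective hδ hε) e,
    (F.map_map_of_comp_eq_s8 (kerCorrDesc_comp_inl hδ hε) _ _ hδ e).trans he⟩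

theorem centralMap_ofCospan : centralMap F V x W (ofCospan hδ hε he) = F.map ε hε e :=
  F.map_map_of_comp_eq_s8 (kerCorrDesc_comp_inr hδ hε) _ _ hε e

end OfCospan

section Restrict

variable {F : VIPresheaf p} {T V W X : FDVec p} {x : F.obj V} {α : T →ₗ[ZMod p] V}
  (hα : Function.Injective α)

/-- The map `σ_{(V,x)}F(W) → σ_{(T,α^*x)}F(W)` restricting `b ∈ F(V ⊕_{ν,ω} W)` to the span of
`T` and `W`. -/
def restrict (s : CentralFib F V x W) : CentralFib F T (F.map α hα x) W :=
  ofCospan (comp_injective α s.1.inl hα s.1.inl_injective) s.1.inr_injective (e := s.2.1)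
    (by rw [F.map_comp α hα _ s.1.inl_injective, s.2.2])

theorem centralMap_restrict (s : CentralFib F V x W) :
    centralMap F T (F.map α hα x) W (s.restrict hα) = centralMap F V x W s :=
  centralMap_ofCospan _ _ _

theorem restrict_ofCospan {δ : V →ₗ[ZMod p] X} {ε : W →ₗ[ZMod p] X}
    (hδ : Function.Injective δ) (hε : Function.Injective ε) {e : F.obj X}
    (he : F.map δ hδ e = x) :
    (ofCospan hδ hε he).restrict hα = ofCospan (comp_injective α δ hα hδ) hε
      (by rw [F.map_comp α hα δ hδ, he]) := by
  let c := kerCorr δ ε hδ hε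
  have hα' : Function.Injective (c.inl ∘ₗ α) := comp_injective α c.inl hα c.inl_injective
  refine eq_of_map_eq (g := kerCorrDesc hδ hε ∘ₗ kerCorrDesc hα' c.inr_injective)
    (comp_injective _ _ (kerCorrDesc_injective hα' _) (kerCorrDesc_injective hδ hε))
    (kerCorrDesc_injective _ _) ?_ ?_ (F.map_comp _ _ _ _ _ e) rfl
  · calc _ = kerCorrDesc hδ hε ∘ₗ c.inl ∘ₗ α :=
          congrArg (kerCorrDesc hδ hε ∘ₗ ·) (kerCorrDesc_comp_inl hα' c.inr_injective)
      _ = δ ∘ₗ α := congrArg (· ∘ₗ α) (kerCorrDesc_comp_inl hδ hε)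
      _ = _ := (kerCorrDesc_comp_inl _ hε).symm
  · calc _ = kerCorrDesc hδ hε ∘ₗ c.inr :=
          congrArg (kerCorrDesc hδ hε ∘ₗ ·) (kerCorrDesc_comp_inr hα' c.inr_injective)
      _ = ε := kerCorrDesc_comp_inr hδ hε
      _ = _ := (kerCorrDesc_comp_inr _ hε).symm

end Restrict

end CentralFib

namespace VIPresheaf.IsCentral

variable {F : VIPresheaf p} {T V : FDVec p} {x : F.obj V} {α : T →ₗ[ZMod p] V}

open CentralFib

theorem comp_eq_of_map_eq (hx : F.IsCentral V x) (hα : Function.Injective α) {X : FDVec p}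
    {δ : V →ₗ[ZMod p] X} {ε : T →ₗ[ZMod p] X} (hδ : Function.Injective δ)
    (hε : Function.Injective ε) {e : F.obj X} (he : F.map δ hδ e = x)
    (hT : F.map ε hε e = F.map α hα x) : δ ∘ₗ α = ε := by
  have hfib : ofCospan hδ hε he = ofCospan (linearMap_id_injective V) hα (F.map_id V _ x) :=
    (hx T).injective (by rw [centralMap_ofCospan, centralMap_ofCospan, hT])
  have hker : LinearMap.ker (δ.coprod ε) = LinearMap.ker (LinearMap.id.coprod α) :=
    congrArg (fun s ↦ s.1.carrier) hfib
  ext t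
  have ht : (α t, -t) ∈ LinearMap.ker (δ.coprod ε) := by simp [hker]
  simpa [← sub_eq_add_neg, sub_eq_zero] using ht

theorem restrict_surjective (hx : F.IsCentral V x) (hα : Function.Injective α) (W : FDVec p) :
    Function.Surjective (restrict hα : CentralFib F V x W → CentralFib F T (F.map α hα x) W) := by
  intro s
  obtain ⟨⟨d, e, he⟩, hd : F.map d.inr d.inr_injective e = s.2.1⟩ := (hx s.1.po).surjective s.2.1
  have hT : d.inl ∘ₗ α = d.inr ∘ₗ s.1.inl :=
    hx.comp_eq_of_map_eq hα d.inl_injective (comp_injective _ _ s.1.inl_injective d.inr_injective)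
      he (by rw [F.map_comp _ s.1.inl_injective _ d.inr_injective, hd, s.2.2])
  use ofCospan d.inl_injective (comp_injective _ _ s.1.inr_injective d.inr_injective) he
  rw [restrict_ofCospan]
  exact eq_of_map_eq (kerCorrDesc_injective _ _) d.inr_injective
    ((kerCorrDesc_comp_inl _ _).trans hT) (kerCorrDesc_comp_inr _ _) rfl hd

end VIPresheaf.IsCentral

/-- **Statement 9.** If `(V,x)` is central for `F` and `α : T → V` is an injective
linear map, then `(T, α^* x)` is central for `F`. -/
theorem statement_9 {p : ℕ} [Fact p.Prime] (F : VIPresheaf p) (V : FDVec p) (x : F.obj V)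
    (hx : F.IsCentral V x) (T : FDVec p) (α : T →ₗ[ZMod p] V) (hα : Function.Injective α) :
    F.IsCentral T (F.map α hα x) := by
  intro W
  have hρ : centralMap F T (F.map α hα x) W ∘ CentralFib.restrict hα = centralMap F V x W :=
    funext (CentralFib.centralMap_restrict hα)
  have hbij := hρ ▸ hx W
  exact ⟨hbij.injective.of_comp_right (hx.restrict_surjective hα W), hbij.surjective.of_comp⟩

end Paper
end

section
/- Let F be a presheaf on 𝒱I such that F has at least one central element and such that F(V) = ∅ whenever dim(V) is greater than some fixed integer d. Then there exists a central element (C,c) of F, unique up to isomorphism, such that a pair (V,x) with x ∈ F(V) is central for F if and only if there exists an injective linear map α : V → C with x = α^* c. -/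
set_option maxHeartbeats 1000000

namespace Paper

variable {p : ℕ} [Fact p.Prime]

/-
In the category of elements of `F`, the pair `(V, x)` is central iff it has a coproduct with every
object. All morphisms of this category are mono, in particular the codiagonal of a central element,
so a central element has at most one morphism to any object. A restriction of a central `X` is
central: by the same rigidity, its amalgam with `Y` sits inside `X ⨿ Y` and maps to whatever it
should. Coproducts of central elements are central by associativity, so a central element of maximal
dimension receives a morphism from every central element.
-/

theorem VIPresheaf.map_congr (F : VIPresheaf p) {V W : FDVec p} {f g : V →ₗ[ZMod p] W}
    (h : f = g) (hf : Function.Injective f) (hg : Function.Injective g) (x : F.obj W) :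
    F.map f hf x = F.map g hg x := by
  subst h
  rfl

open CategoryTheory Limits

section Coproducts

variable {C : Type*} [Category* C]

theorem coprod_inr_eq_comp_inl {X U : C} [HasBinaryCoproduct X U] (f : U ⟶ X)
    [Mono (coprod.desc (𝟙 X) f)] : (coprod.inr : U ⟶ X ⨿ U) = f ≫ coprod.inl := by
  simp [← cancel_mono (coprod.desc (𝟙 X) f), coprod.inl_desc, coprod.inr_desc]

theorem comp_eq_of_mono_coprod_desc_id {X U T : C} [HasBinaryCoproduct X U] (f : U ⟶ X)
    [Mono (coprod.desc (𝟙 X) f)] (l : X ⟶ T) (r : U ⟶ T) : f ≫ l = r :=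
  calc
    f ≫ l = (f ≫ coprod.inl) ≫ coprod.desc l r := by simp [coprod.inl_desc]
    _ = coprod.inr ≫ coprod.desc l r := by rw [← coprod_inr_eq_comp_inl f]
    _ = r := coprod.inr_desc l r

theorem hasBinaryCoproduct_coprod_left (X Y Z : C) [HasBinaryCoproduct X Y]
    [HasBinaryCoproduct Y Z] [HasBinaryCoproduct X (Y ⨿ Z)] : HasBinaryCoproduct (X ⨿ Y) Z := by
  refine ⟨⟨BinaryCofan.mk (P := X ⨿ (Y ⨿ Z)) (coprod.map (𝟙 X) coprod.inl)
    (coprod.inr ≫ coprod.inr), BinaryCofan.isColimitMk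
    (fun c => coprod.desc (coprod.inl ≫ c.inl) (coprod.desc (coprod.inr ≫ c.inl) c.inr))
    (fun c => coprod.hom_ext ?_ ?_) (fun c => ?_) fun c m hl hr => ?_⟩⟩
  · simp [coprod.inl_desc]
  · rw [coprod.inr_map_assoc, coprod.inr_desc]
    exact coprod.inl_desc _ _
  · rw [Category.assoc, coprod.inr_desc]
    exact coprod.inr_desc _ _
  · refine coprod.hom_ext ?_ (coprod.hom_ext ?_ ?_)
    · simp [← hl, coprod.inl_desc]
    · rw [coprod.inr_desc, ← hl, coprod.inr_map_assoc]
      exact (coprod.inl_desc _ _).symm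
    · simp [← hr, coprod.inr_desc]

end Coproducts

/-- An object `(V, x)` of the category of elements of `F`. -/
structure VIPresheaf.Element (F : VIPresheaf p) where
  space : FDVec p
  elt : F.obj space

namespace VIPresheaf.Element

variable {F : VIPresheaf p}

/-- A morphism `(V, x) ⟶ (W, y)` of the category of elements: an injection `α` with
`α^* y = x`. -/
@[ext]
structure Hom (X Y : F.Element) where
  toLinearMap : X.space →ₗ[ZMod p] Y.space
  injective : Function.Injective toLinearMap
  map_elt : F.map toLinearMap injective Y.elt = X.elt

instance : Category F.Element where
  Hom := Hom
  id X := ⟨LinearMap.id, Function.injective_id, F.map_id _ _ _⟩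
  comp f g := ⟨g.toLinearMap ∘ₗ f.toLinearMap, g.injective.comp f.injective, by
    rw [F.map_comp f.toLinearMap f.injective g.toLinearMap g.injective, g.map_elt, f.map_elt]⟩

variable {X Y Z U : F.Element}

theorem hom_ext {f g : X ⟶ Y} (h : f.toLinearMap = g.toLinearMap) : f = g :=
  Hom.ext h

theorem comp_toLinearMap (f : X ⟶ Y) (g : Y ⟶ Z) :
    (f ≫ g).toLinearMap = g.toLinearMap ∘ₗ f.toLinearMap := rfl

instance (f : X ⟶ Y) : Mono f where
  right_cancellation _ _ hgh := hom_ext <| LinearMap.ext fun v =>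
    f.injective (LinearMap.congr_fun (congrArg Hom.toLinearMap hgh) v)

theorem exists_comp_eq_of_range_le (f : X ⟶ Z) (g : Y ⟶ Z)
    (h : LinearMap.range f.toLinearMap ≤ LinearMap.range g.toLinearMap) :
    ∃ k : X ⟶ Y, k ≫ g = f := by
  let e := LinearEquiv.ofInjective g.toLinearMap g.injective
  let φ : X.space →ₗ[ZMod p] Y.space :=
    e.symm.toLinearMap ∘ₗ f.toLinearMap.codRestrict _ fun v => h ⟨v, rfl⟩
  have hφ : g.toLinearMap ∘ₗ φ = f.toLinearMap := LinearMap.ext fun v =>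
    congrArg Subtype.val (e.apply_symm_apply _)
  have hφ_inj : Function.Injective φ :=
    Function.Injective.of_comp (f := g.toLinearMap) (by
      rw [← LinearMap.coe_comp, hφ]
      exact f.injective)
  refine ⟨⟨φ, hφ_inj, ?_⟩, hom_ext hφ⟩
  rw [← g.map_elt, ← F.map_comp φ hφ_inj _ g.injective (g.injective.comp hφ_inj),
    F.map_congr hφ _ f.injective, f.map_elt]

theorem finrank_le (f : X ⟶ Y) :
    Module.finrank (ZMod p) X.space ≤ Module.finrank (ZMod p) Y.space :=
  LinearMap.finrank_le_finrank_of_injective f.injective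

theorem isIso_of_finrank_le (f : X ⟶ Y)
    (h : Module.finrank (ZMod p) Y.space ≤ Module.finrank (ZMod p) X.space) : IsIso f := by
  have hsurj : LinearMap.range f.toLinearMap = ⊤ := LinearMap.range_eq_top.mpr <|
    (LinearMap.injective_iff_surjective_of_finrank_eq_finrank
      ((finrank_le f).antisymm h)).mp f.injective
  obtain ⟨g, hg⟩ := exists_comp_eq_of_range_le (𝟙 Y) f (hsurj ▸ le_top)
  have : IsSplitEpi f := ⟨⟨g, hg⟩⟩
  exact isIso_of_mono_of_isSplitEpi f

theorem exists_linearEquiv_of_iso (e : X ≅ Y) :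
    ∃ β : X.space ≃ₗ[ZMod p] Y.space,
      X.elt = F.map β.toLinearMap (equiv_toLinearMap_injective β) Y.elt :=
  ⟨LinearEquiv.ofLinearMap e.hom.toLinearMap e.inv.toLinearMap
    (congrArg Hom.toLinearMap e.inv_hom_id) (congrArg Hom.toLinearMap e.hom_inv_id),
    e.hom.map_elt.symm⟩

theorem nonempty_hom_iff :
    Nonempty (X ⟶ Y) ↔ ∃ (α : X.space →ₗ[ZMod p] Y.space) (hα : Function.Injective α),
      X.elt = F.map α hα Y.elt :=
  ⟨fun ⟨f⟩ => ⟨f.toLinearMap, f.injective, f.map_elt.symm⟩,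
    fun ⟨α, hα, h⟩ => ⟨⟨α, hα, h.symm⟩⟩⟩

/-- A point of the fibre of `ρ_{F,(V,x)}` over `y ∈ F(W)`, for `X = (V, x)` and `Y = (W, y)`: a
pushout `V ⊕_{ν,ω} W` with an element that restricts to both `x` and `y`. -/
structure Amalgam (X Y : F.Element) where
  corr : Corr p X.space Y.space
  elt : F.obj corr.po
  map_inl : F.map (W := corr.po) corr.inl corr.inl_injective elt = X.elt
  map_inr : F.map (W := corr.po) corr.inr corr.inr_injective elt = Y.elt

namespace Amalgam

/-- The fibre of `ρ_{F,(V,x)}` over `y`, unbundled into the fields of `Amalgam`. -/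
def fiberEquiv (X Y : F.Element) :
    {s : CentralFib F X.space X.elt Y.space // centralMap F X.space X.elt Y.space s = Y.elt} ≃
      Amalgam X Y where
  toFun s := ⟨s.1.1, s.1.2.1, s.1.2.2, s.2⟩
  invFun s := ⟨⟨s.corr, s.elt, s.map_inl⟩, s.map_inr⟩

/-- The pushout carrying the amalgam, as an object of the category of elements. -/
abbrev apex (s : Amalgam X Y) : F.Element := ⟨s.corr.po, s.elt⟩

/-- The canonical injection `ι_V` into the pushout. -/
def inl (s : Amalgam X Y) : X ⟶ s.apex := ⟨s.corr.inl, s.corr.inl_injective, s.map_inl⟩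

/-- The canonical injection `ι_W` into the pushout. -/
def inr (s : Amalgam X Y) : Y ⟶ s.apex := ⟨s.corr.inr, s.corr.inr_injective, s.map_inr⟩

theorem coprod_inl_inr (s : Amalgam X Y) :
    s.inl.toLinearMap.coprod s.inr.toLinearMap = s.corr.carrier.mkQ := by
  change (s.corr.carrier.mkQ ∘ₗ _).coprod (s.corr.carrier.mkQ ∘ₗ _) = _
  rw [← LinearMap.comp_coprod, LinearMap.coprod_inl_inr, LinearMap.comp_id]

theorem range_inl_sup_range_inr (s : Amalgam X Y) :
    LinearMap.range s.inl.toLinearMap ⊔ LinearMap.range s.inr.toLinearMap = ⊤ := by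
  rw [← LinearMap.range_coprod, coprod_inl_inr, Submodule.range_mkQ]

theorem comp_mkQ (s : Amalgam X Y) (f : s.apex ⟶ Z) :
    f.toLinearMap ∘ₗ s.corr.carrier.mkQ =
      (s.inl ≫ f).toLinearMap.coprod (s.inr ≫ f).toLinearMap := by
  rw [← coprod_inl_inr, LinearMap.comp_coprod, comp_toLinearMap, comp_toLinearMap]

theorem apex_hom_ext (s : Amalgam X Y) {f g : s.apex ⟶ Z} (hl : s.inl ≫ f = s.inl ≫ g)
    (hr : s.inr ≫ f = s.inr ≫ g) : f = g := by
  refine hom_ext (Submodule.linearMap_qext _ ?_)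
  rw [comp_mkQ, comp_mkQ, hl, hr]

theorem exists_apex_hom_comp_eq (s : Amalgam X Y) (f : s.apex ⟶ Z) (g : U ⟶ Z) {l : X ⟶ U}
    {r : Y ⟶ U} (hl : s.inl ≫ f = l ≫ g) (hr : s.inr ≫ f = r ≫ g) :
    ∃ k : s.apex ⟶ U, k ≫ g = f := by
  refine exists_comp_eq_of_range_le f g ?_
  rw [LinearMap.range_eq_map, ← range_inl_sup_range_inr, Submodule.map_sup,
    ← LinearMap.range_comp, ← LinearMap.range_comp, ← comp_toLinearMap, ← comp_toLinearMap, hl, hr]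
  exact sup_le (LinearMap.range_comp_le_range _ _) (LinearMap.range_comp_le_range _ _)

theorem exists_desc (l : X ⟶ Z) (r : Y ⟶ Z) :
    ∃ (s : Amalgam X Y) (j : s.apex ⟶ Z), s.inl ≫ j = l ∧ s.inr ≫ j = r := by
  let c : Corr p X.space Y.space :=
    kerCorr l.toLinearMap r.toLinearMap l.injective r.injective
  let j : c.po →ₗ[ZMod p] Z.space :=
    c.carrier.liftQ (l.toLinearMap.coprod r.toLinearMap) le_rfl
  have hj : Function.Injective j :=
    LinearMap.ker_eq_bot.mp (Submodule.ker_liftQ_eq_bot _ _ _ le_rfl)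
  have hl : j ∘ₗ c.inl = l.toLinearMap := LinearMap.coprod_inl _ _
  have hr : j ∘ₗ c.inr = r.toLinearMap := LinearMap.coprod_inr _ _
  refine ⟨⟨c, F.map (V := c.po) j hj Z.elt, ?_, ?_⟩, ⟨j, hj, rfl⟩, hom_ext hl, hom_ext hr⟩
  · rw [← F.map_comp (W := c.po) c.inl c.inl_injective j hj (hj.comp c.inl_injective),
      F.map_congr hl _ l.injective, l.map_elt]
  · rw [← F.map_comp (W := c.po) c.inr c.inr_injective j hj (hj.comp c.inr_injective),
      F.map_congr hr _ r.injective, r.map_elt]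

theorem eq_of_hom {s t : Amalgam X Y} (f : s.apex ⟶ t.apex) (hl : s.inl ≫ f = t.inl)
    (hr : s.inr ≫ f = t.inr) : s = t := by
  have hmkQ : f.toLinearMap ∘ₗ s.corr.carrier.mkQ = t.corr.carrier.mkQ := by
    rw [comp_mkQ, hl, hr, coprod_inl_inr]
  have hcarrier : s.corr.carrier = t.corr.carrier := by
    rw [← t.corr.carrier.ker_mkQ, ← hmkQ,
      LinearMap.ker_comp_of_ker_eq_bot _ (LinearMap.ker_eq_bot.mpr f.injective),
      Submodule.ker_mkQ]
  obtain ⟨⟨G, _, _⟩, b, _, _⟩ := s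
  obtain ⟨⟨G', _, _⟩, b', _, _⟩ := t
  obtain rfl : G = G' := hcarrier
  have hf : f.toLinearMap = LinearMap.id := Submodule.linearMap_qext G hmkQ
  obtain rfl : b = b' :=
    f.map_elt.symm.trans <| (F.map_congr hf _ Function.injective_id b').trans (F.map_id _ _ b')
  rfl

theorem hasBinaryCoproduct (s : Amalgam X Y)
    (h : ∀ (Z : F.Element) (l : X ⟶ Z) (r : Y ⟶ Z),
      ∃ k : s.apex ⟶ Z, s.inl ≫ k = l ∧ s.inr ≫ k = r) : HasBinaryCoproduct X Y := by
  choose k hl hr using h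
  exact ⟨⟨BinaryCofan.mk s.inl s.inr, BinaryCofan.isColimitMk (fun c => k _ c.inl c.inr)
    (fun c => hl _ _ _) (fun c => hr _ _ _) fun c m hml hmr =>
      s.apex_hom_ext (hml.trans (hl _ _ _).symm) (hmr.trans (hr _ _ _).symm)⟩⟩

end Amalgam

theorem isCentral_iff_unique_amalgam :
    F.IsCentral X.space X.elt ↔ ∀ Y : F.Element, Nonempty (Unique (Amalgam X Y)) := by
  simp only [VIPresheaf.IsCentral, Function.bijective_iff_existsUnique,
    ← unique_subtype_iff_existsUnique, ← (Amalgam.fiberEquiv X _).uniqueCongr.nonempty_congr]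
  exact ⟨fun h Y => h Y.space Y.elt, fun h W y => h ⟨W, y⟩⟩

theorem isCentral_iff_hasBinaryCoproduct :
    F.IsCentral X.space X.elt ↔ ∀ Y : F.Element, HasBinaryCoproduct X Y := by
  refine isCentral_iff_unique_amalgam.trans (forall_congr' fun Y => ⟨?_, fun _ => ?_⟩)
  · rintro ⟨⟨⟨s⟩, hs⟩⟩
    refine s.hasBinaryCoproduct fun Z l r => ?_
    obtain ⟨t, k, hl, hr⟩ := Amalgam.exists_desc l r
    obtain rfl := hs t
    exact ⟨k, hl, hr⟩
  · obtain ⟨s, j, hl, hr⟩ := Amalgam.exists_desc (coprod.inl : X ⟶ X ⨿ Y) coprod.inr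
    refine ⟨⟨s⟩, fun t => (Amalgam.eq_of_hom (j ≫ coprod.desc t.inl t.inr) ?_ ?_).symm⟩
    · rw [reassoc_of% hl, coprod.inl_desc]
    · rw [reassoc_of% hr, coprod.inr_desc]

theorem hasBinaryCoproduct_of_hom [∀ Y : F.Element, HasBinaryCoproduct X Y] (f : U ⟶ X)
    (Y : F.Element) : HasBinaryCoproduct U Y := by
  obtain ⟨s, j, hjl, hjr⟩ := Amalgam.exists_desc (f ≫ (coprod.inl : X ⟶ X ⨿ Y)) coprod.inr
  refine s.hasBinaryCoproduct fun Z l r => ?_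
  -- `g` is mono, so it suffices to construct `s.apex ⟶ Z` after embedding `Z` in `X ⨿ Z`.
  let g : Z ⟶ X ⨿ Z := coprod.inr
  have hl : s.inl ≫ j ≫ coprod.map (𝟙 X) r = l ≫ g := by
    rw [reassoc_of% hjl, coprod.inl_map, Category.id_comp]
    exact comp_eq_of_mono_coprod_desc_id f _ _
  have hr : s.inr ≫ j ≫ coprod.map (𝟙 X) r = r ≫ g := by
    rw [reassoc_of% hjr, coprod.inr_map]
  obtain ⟨k, hk⟩ := s.exists_apex_hom_comp_eq _ g hl hr
  refine ⟨k, ?_, ?_⟩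
  · rw [← cancel_mono g, Category.assoc, hk, hl]
  · rw [← cancel_mono g, Category.assoc, hk, hr]

theorem isCentral_of_hom (hX : F.IsCentral X.space X.elt) (f : U ⟶ X) :
    F.IsCentral U.space U.elt := by
  rw [isCentral_iff_hasBinaryCoproduct] at hX ⊢
  exact hasBinaryCoproduct_of_hom f

theorem isCentral_coprod [HasBinaryCoproduct X Y] (hX : F.IsCentral X.space X.elt)
    (hY : F.IsCentral Y.space Y.elt) : F.IsCentral (X ⨿ Y).space (X ⨿ Y).elt := by
  rw [isCentral_iff_hasBinaryCoproduct] at hX hY ⊢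
  exact fun Z => hasBinaryCoproduct_coprod_left X Y Z

theorem nonempty_hom_of_maximalFor {C : F.Element}
    (hC : MaximalFor (fun X : F.Element => F.IsCentral X.space X.elt)
      (fun X => Module.finrank (ZMod p) X.space) C)
    (hX : F.IsCentral X.space X.elt) : Nonempty (X ⟶ C) := by
  have := isCentral_iff_hasBinaryCoproduct.mp hC.1 X
  have hmax := hC.2 (isCentral_coprod hC.1 hX) (finrank_le coprod.inl)
  have := isIso_of_finrank_le (coprod.inl : C ⟶ C ⨿ X) hmax
  exact ⟨coprod.inr ≫ inv coprod.inl⟩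

theorem hom_eq_of_isCentral (hX : F.IsCentral X.space X.elt) (f g : X ⟶ Y) : f = g := by
  have := isCentral_iff_hasBinaryCoproduct.mp hX X
  rw [← comp_eq_of_mono_coprod_desc_id (𝟙 X) f g, Category.id_comp]

theorem nonempty_iso_of_isCentral (hX : F.IsCentral X.space X.elt)
    (hY : F.IsCentral Y.space Y.elt) (f : X ⟶ Y) (g : Y ⟶ X) : Nonempty (X ≅ Y) :=
  ⟨⟨f, g, hom_eq_of_isCentral hX _ _, hom_eq_of_isCentral hY _ _⟩⟩

end VIPresheaf.Element

open VIPresheaf.Element in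
theorem statement_11_general (F : VIPresheaf p) (d : ℕ)
    (hne : ∃ (V : FDVec p) (x : F.obj V), F.IsCentral V x)
    (hd : ∀ (V : FDVec p) (x : F.obj V), F.IsCentral V x → Module.finrank (ZMod p) V ≤ d) :
    ∃ (C : FDVec p) (c : F.obj C),
      F.IsCentral C c ∧
      (∀ (V : FDVec p) (x : F.obj V), F.IsCentral V x ↔
        ∃ (α : V →ₗ[ZMod p] C) (hα : Function.Injective α), x = F.map α hα c) ∧
      (∀ (C' : FDVec p) (c' : F.obj C'),
        (F.IsCentral C' c' ∧
          ∀ (V : FDVec p) (x : F.obj V), F.IsCentral V x ↔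
            ∃ (α : V →ₗ[ZMod p] C') (hα : Function.Injective α), x = F.map α hα c') →
        ∃ (β : ↥C ≃ₗ[ZMod p] ↥C'),
          c = F.map β.toLinearMap (equiv_toLinearMap_injective β) c') := by
  obtain ⟨V, x, hx⟩ := hne
  let central : Set F.Element := {X | F.IsCentral X.space X.elt}
  have hfin : ((fun X : F.Element => Module.finrank (ZMod p) X.space) '' central).Finite :=
    (Set.finite_Iic d).subset (Set.image_subset_iff.mpr fun X hX => hd X.space X.elt hX)
  obtain ⟨C, hC⟩ := hfin.exists_maximalFor' _ _ ⟨⟨V, x⟩, hx⟩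
  refine ⟨C.space, C.elt, hC.1, fun V x => ?_, fun C' c' ⟨hc', h⟩ => ?_⟩
  · rw [← nonempty_hom_iff (X := ⟨V, x⟩) (Y := C)]
    exact ⟨nonempty_hom_of_maximalFor hC (X := ⟨V, x⟩), fun ⟨f⟩ => isCentral_of_hom hC.1 f⟩
  · obtain ⟨f⟩ := nonempty_hom_iff (X := C) (Y := ⟨C', c'⟩) |>.mpr ((h C.space C.elt).mp hC.1)
    obtain ⟨g⟩ := nonempty_hom_of_maximalFor hC (X := ⟨C', c'⟩) hc'
    obtain ⟨e⟩ := nonempty_iso_of_isCentral (Y := ⟨C', c'⟩) hC.1 hc' f g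
    exact exists_linearEquiv_of_iso e

/-- **Statement 11.** If `F` has at least one central element and `F(V) = ∅` whenever
`dim V > d`, then there exists a central element `(C, c)`, unique up to isomorphism,
such that `(V, x)` is central for `F` iff there is an injective linear map `α : V → C`
with `x = α^* c`. -/
theorem statement_11 {p : ℕ} [Fact p.Prime] (F : VIPresheaf p) (d : ℕ)
    (hne : ∃ (V : FDVec p) (x : F.obj V), F.IsCentral V x)
    (hd : ∀ V : FDVec p, d < Module.finrank (ZMod p) V → IsEmpty (F.obj V)) :
    ∃ (C : FDVec p) (c : F.obj C),
      F.IsCentral C c ∧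
      (∀ (V : FDVec p) (x : F.obj V), F.IsCentral V x ↔
        ∃ (α : V →ₗ[ZMod p] C) (hα : Function.Injective α), x = F.map α hα c) ∧
      (∀ (C' : FDVec p) (c' : F.obj C'),
        (F.IsCentral C' c' ∧
          ∀ (V : FDVec p) (x : F.obj V), F.IsCentral V x ↔
            ∃ (α : V →ₗ[ZMod p] C') (hα : Function.Injective α), x = F.map α hα c') →
        ∃ (β : ↥C ≃ₗ[ZMod p] ↥C'),
          c = F.map β.toLinearMap (equiv_toLinearMap_injective β) c') :=
  statement_11_general F d hne fun V x _ =>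
    not_lt.mp fun hV => (hd V hV).false x

end Paper
end
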